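/- Let 2 ≤ p < ∞, 0 < q ≤ ∞, and s > 0. There exists C > 0, depending only on φ, Φ, p, q, s, such that for every admissible finite collection 𝓘 = {[a_m,b_m]}_{m=1}^N and every Schwartz function f, setting g_m(x) = e^{−2πi a_m x}(f∗φ_m)(x), one has ( Σ_{j∈ℤ} ( 2^{js} ‖ ( Σ_{m=1}^N |(g_m∗ψ_j)(x)|² )^{1/2} ‖_{L^p(dx)} )^q )^{1/q} ≤ C ( Σ_{j∈ℤ} ( 2^{js} ‖ f∗ψ_j ‖_{L^p} )^q )^{1/q} (suprema over j when q = ∞). This is the uniform boundedness of the rotated family on the homogeneous Besov space Ḃ^s_{pq}. -/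

import Mathlib

open MeasureTheory Real Set Function
open scoped FourierTransform ENNReal NNReal

/-- `e2pi t = e^{2πit}`. -/
noncomputable def e2pi (t : ℝ) : ℂ := Complex.exp (2 * (Real.pi : ℂ) * Complex.I * (t : ℂ))

/-- Convolution of two functions on `ℝ`. -/
noncomputable def conv (f g : ℝ → ℂ) (x : ℝ) : ℂ := ∫ t, f t * g (x - t)

/-- The function `φ_m` associated with the interval `[a,b]`: its Fourier transform is
`ξ ↦ 𝓕φ ((ξ - a)/(b - a))`; in space variables it is `x ↦ (b-a) e^{2πiax} φ((b-a)x)`. -/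
noncomputable def phim (φ : ℝ → ℂ) (a b : ℝ) (x : ℝ) : ℂ :=
  ((b - a : ℝ) : ℂ) * e2pi (a * x) * φ ((b - a) * x)

/-- A finite collection of compact intervals `[a m, b m]` is admissible if the intervals are
nondegenerate, pairwise disjoint, and none of them contains `0` in its interior. -/
def Admissible {N : ℕ} (a b : Fin N → ℝ) : Prop :=
  (∀ m, a m < b m) ∧ (∀ m, (0 : ℝ) ∉ Set.Ioo (a m) (b m)) ∧
    ∀ m m', m ≠ m' → Disjoint (Set.Icc (a m) (b m)) (Set.Icc (a m') (b m'))

/-- The rotated Rubio de Francia piece `g_m(x) = e^{-2πi a x} (f ∗ φ_m)(x)`. -/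
noncomputable def rotConv (φ : ℝ → ℂ) (a b : ℝ) (f : ℝ → ℂ) (x : ℝ) : ℂ :=
  e2pi (-(a * x)) * conv f (phim φ a b) x

/-- Littlewood–Paley block `ψ_j`, whose Fourier transform is `ξ ↦ 𝓕Φ(2^{-j}ξ) - 𝓕Φ(2^{-j+1}ξ)`. -/
noncomputable def psi (Φ : ℝ → ℂ) (j : ℤ) (x : ℝ) : ℂ :=
  (((2:ℝ) ^ j : ℝ) : ℂ) * Φ ((2:ℝ) ^ j * x) - (((2:ℝ) ^ (j-1) : ℝ) : ℂ) * Φ ((2:ℝ) ^ (j-1) * x)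

/-- The `ℓ^q` (quasi)norm of a sequence indexed by `ℤ`, with values in `[0,∞]`;
for `q = ∞` it is the supremum. -/
noncomputable def lqNorm (q : ℝ≥0∞) (F : ℤ → ℝ≥0∞) : ℝ≥0∞ :=
  if q = ∞ then ⨆ j, F j else (∑' j, F j ^ q.toReal) ^ (1 / q.toReal)

/-!
Undoing the rotation, `|g_m ∗ ψ_j| = |T f|` for the Fourier multiplier `T` with symbol
`φ̂((ξ - a_m) / (b_m - a_m)) ψ̂_j(ξ - a_m)`. Split `f = ∑ k, f ∗ ψ_k`; on `f ∗ ψ_k` the symbol may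
be cut off to `|ξ| ≲ 2 ^ k`, and it then lives on an interval of length
`≲ Z := min (2 ^ j) (2 ^ k)`. If `2 ^ k ≪ 2 ^ j`, then `0 ∉ (a_m, b_m)` puts the surviving `ξ`
within a distance `≲ 2 ^ k` of `b_m`, while `b_m - a_m ≳ 2 ^ j`; since `φ̂` vanishes to infinite
order at `1`, the symbol is `O((2 ^ k / 2 ^ j) ^ M)` in `C¹` at scale `Z`, for every `M`.

The symbols of the different intervals have disjoint supports, so Bessel's inequality for the
inverse Fourier transforms dominates the square function pointwise by the square root of
`|f ∗ ψ_k|²` convolved with the integrable weight `Z / (1 + Z² y²)`. As `p / 2 ≥ 1`, Young's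
inequality gives the `L^p` bound `O((Z / 2 ^ j) ^ M ‖f ∗ ψ_k‖_p)`. For `M ≥ 2 s` the coefficients
`2 ^ ((j - k) s) (Z / 2 ^ j) ^ M` decay geometrically in `|j - k|`, and summing over `k` is a
discrete convolution bounded on `ℓ^q`.
-/

open scoped SchwartzMap Convolution

section SequenceNorm

theorem rpow_tsum_mul_le {ι : Type*} {r : ℝ} (hr : 0 < r) (w b : ι → ℝ≥0∞) :
    (∑' k, w k * b k) ^ r ≤ (∑' k, w k) ^ r * ∑' k, b k ^ r := by
  have hb (k : ι) : b k ≤ (∑' i, b i ^ r) ^ r⁻¹ :=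
    (ENNReal.le_rpow_inv_iff hr).2 (ENNReal.le_tsum k)
  calc (∑' k, w k * b k) ^ r ≤ ((∑' k, w k) * (∑' i, b i ^ r) ^ r⁻¹) ^ r := by
        rw [← ENNReal.tsum_mul_right]
        gcongr with k
        exact hb k
    _ = (∑' k, w k) ^ r * ∑' k, b k ^ r := by
        rw [ENNReal.mul_rpow_of_nonneg _ _ hr.le, ENNReal.rpow_inv_rpow hr.ne']

variable {q : ℝ≥0∞}

theorem lqNorm_mono {F G : ℤ → ℝ≥0∞} (h : ∀ j, F j ≤ G j) : lqNorm q F ≤ lqNorm q G := by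
  unfold lqNorm
  split_ifs
  · exact iSup_mono h
  · gcongr with j
    exact h j

theorem lqNorm_const_mul (hq : q ≠ 0) (c : ℝ≥0∞) (F : ℤ → ℝ≥0∞) :
    lqNorm q (fun j => c * F j) = c * lqNorm q F := by
  unfold lqNorm
  split_ifs with hq'
  · rw [ENNReal.mul_iSup]
  · have hr : 0 < q.toReal := ENNReal.toReal_pos hq hq'
    simp_rw [ENNReal.mul_rpow_of_nonneg _ _ hr.le]
    rw [ENNReal.tsum_mul_left, ENNReal.mul_rpow_of_nonneg _ _ (by positivity), one_div,
      ENNReal.rpow_rpow_inv hr.ne']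

/-- The kernel is factored as `w * v` because for `q < 1` one factor has to be summable and the
other one in `ℓ^q`. -/
theorem lqNorm_tsum_mul_le (hq : q ≠ 0) (w v A : ℤ → ℝ≥0∞) :
    lqNorm q (fun j => ∑' k, w (j - k) * v (j - k) * A k) ≤
      (∑' n, w n) * lqNorm q v * lqNorm q A := by
  have hw (j : ℤ) : ∑' k, w (j - k) = ∑' n, w n := (Equiv.subLeft j).tsum_eq w
  have hv (r : ℝ) (k : ℤ) : ∑' j, v (j - k) ^ r = ∑' n, v n ^ r :=
    (Equiv.subRight k).tsum_eq fun n => v n ^ r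
  unfold lqNorm
  split_ifs with hq'
  · refine iSup_le fun j => ?_
    simp_rw [← hw j, mul_assoc, ← ENNReal.tsum_mul_right]
    gcongr with k
    · exact le_iSup v (j - k)
    · exact le_iSup A k
  have hr : 0 < q.toReal := ENNReal.toReal_pos hq hq'
  set r := q.toReal
  have hsum : ∑' j, (∑' k, w (j - k) * v (j - k) * A k) ^ r ≤
      (∑' n, w n) ^ r * ((∑' n, v n ^ r) * ∑' k, A k ^ r) := by
    calc ∑' j, (∑' k, w (j - k) * v (j - k) * A k) ^ r
        ≤ ∑' j, (∑' n, w n) ^ r * ∑' k, v (j - k) ^ r * A k ^ r := by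
          gcongr with j
          simpa only [mul_assoc, hw, ENNReal.mul_rpow_of_nonneg _ _ hr.le] using
            rpow_tsum_mul_le hr (fun k => w (j - k)) (fun k => v (j - k) * A k)
      _ = (∑' n, w n) ^ r * ∑' k, ∑' j, v (j - k) ^ r * A k ^ r := by
          rw [ENNReal.tsum_mul_left, ENNReal.tsum_comm]
      _ = _ := by
          simp_rw [ENNReal.tsum_mul_right, hv, ENNReal.tsum_mul_left]
  calc _ ≤ ((∑' n, w n) ^ r * ((∑' n, v n ^ r) * ∑' k, A k ^ r)) ^ (1 / r) := by gcongr
    _ = _ := by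
      rw [ENNReal.mul_rpow_of_nonneg _ _ (by positivity),
        ENNReal.mul_rpow_of_nonneg _ _ (by positivity), one_div, ENNReal.rpow_rpow_inv hr.ne',
        mul_assoc]

theorem tsum_pow_natAbs_ne_top {ρ : ℝ≥0∞} (hρ : ρ < 1) : ∑' n : ℤ, ρ ^ n.natAbs ≠ ∞ := by
  have hgeom : ∑' n : ℕ, ρ ^ n ≠ ∞ := by
    rw [ENNReal.tsum_geometric]
    exact ENNReal.inv_ne_top.2 (tsub_pos_of_lt hρ).ne'
  have hneg (n : ℕ) : (-((n : ℤ) + 1)).natAbs = n + 1 := by omega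
  rw [tsum_of_nat_of_neg_add_one ENNReal.summable ENNReal.summable]
  simp_rw [hneg, Int.natAbs_natCast, pow_succ, ENNReal.tsum_mul_right]
  exact ENNReal.add_ne_top.2 ⟨hgeom, ENNReal.mul_ne_top hgeom hρ.ne_top⟩

theorem lqNorm_pow_natAbs_ne_top (hq : q ≠ 0) {ρ : ℝ≥0∞} (hρ : ρ < 1) :
    lqNorm q (fun n => ρ ^ n.natAbs) ≠ ∞ := by
  unfold lqNorm
  split_ifs with hq'
  · exact ne_top_of_le_ne_top ENNReal.one_ne_top (iSup_le fun n => pow_le_one' hρ.le _)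
  · have hr : 0 < q.toReal := ENNReal.toReal_pos hq hq'
    refine ENNReal.rpow_ne_top_of_nonneg (by positivity) ?_
    simp_rw [← ENNReal.rpow_natCast, ← ENNReal.rpow_mul, mul_comm _ q.toReal, ENNReal.rpow_mul,
      ENNReal.rpow_natCast]
    exact tsum_pow_natAbs_ne_top (ENNReal.rpow_lt_one hρ hr)

end SequenceNorm

section Minkowski

variable {α ι : Type*} [MeasurableSpace α] {μ : Measure α} {p : ℝ} {F : ι → α → ℝ≥0∞}

theorem lintegral_rpow_finsetSum_le (hp : 1 ≤ p) (hF : ∀ k, AEMeasurable (F k) μ) (t : Finset ι) :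
    (∫⁻ x, (∑ k ∈ t, F k x) ^ p ∂μ) ^ (1 / p) ≤ ∑ k ∈ t, (∫⁻ x, F k x ^ p ∂μ) ^ (1 / p) := by
  classical
  have hp0 : 0 < p := by linarith
  induction t using Finset.induction_on with
  | empty => simp [hp0]
  | insert k t hk ih =>
    simp_rw [Finset.sum_insert hk]
    refine (ENNReal.lintegral_Lp_add_le (hF k) (Finset.aemeasurable_fun_sum t fun i _ => hF i)
      hp).trans ?_
    gcongr

theorem lintegral_rpow_tsum_le [Countable ι] (hp : 1 ≤ p) (hF : ∀ k, AEMeasurable (F k) μ) :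
    (∫⁻ x, (∑' k, F k x) ^ p ∂μ) ^ (1 / p) ≤ ∑' k, (∫⁻ x, F k x ^ p ∂μ) ^ (1 / p) := by
  have hp0 : 0 < p := by linarith
  have hsup (x : α) : (∑' k, F k x) ^ p = ⨆ t : Finset ι, (∑ k ∈ t, F k x) ^ p := by
    rw [ENNReal.tsum_eq_iSup_sum]
    exact (ENNReal.orderIsoRpow p hp0).map_iSup _
  have hdir : Directed (· ≤ ·) fun (t : Finset ι) x => (∑ k ∈ t, F k x) ^ p :=
    Monotone.directed_le fun _ _ hst x => ENNReal.rpow_le_rpow (Finset.sum_le_sum_of_subset hst)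
      hp0.le
  simp_rw [hsup]
  rw [lintegral_iSup_directed
    (fun t => (Finset.aemeasurable_fun_sum t fun i _ => hF i).pow_const p) hdir, one_div,
    ENNReal.rpow_inv_le_iff hp0]
  refine iSup_le fun t => (ENNReal.rpow_inv_le_iff hp0).1 ?_
  rw [← one_div]
  exact (lintegral_rpow_finsetSum_le hp hF t).trans (ENNReal.sum_le_tsum t)

theorem rpow_sum_tsum_le [Countable ι] {κ : Type*} [Fintype κ] (hp : 1 ≤ p)
    (u : ι → κ → ℝ≥0∞) :
    (∑ m, (∑' k, u k m) ^ p) ^ (1 / p) ≤ ∑' k, (∑ m, u k m ^ p) ^ (1 / p) := by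
  let _ : MeasurableSpace κ := ⊤
  simpa only [lintegral_count, tsum_fintype] using
    lintegral_rpow_tsum_le (μ := Measure.count) hp fun k =>
      (measurable_from_top (f := u k)).aemeasurable

end Minkowski

section Young

theorem lintegral_mul_rpow_le {α : Type*} [MeasurableSpace α] {μ : Measure α} {r : ℝ} (hr : 1 ≤ r)
    {F w : α → ℝ≥0∞} (hF : AEMeasurable F μ) (hw : AEMeasurable w μ) :
    (∫⁻ y, F y * w y ∂μ) ^ r ≤ (∫⁻ y, w y ∂μ) ^ (r - 1) * ∫⁻ y, F y ^ r * w y ∂μ := by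
  have hr0 : 0 < r := by linarith
  have hr1 : 0 ≤ 1 - r⁻¹ := sub_nonneg.2 (inv_le_one_of_one_le₀ hr)
  have hsplit (y : α) : F y * w y = (F y ^ r * w y) ^ r⁻¹ * w y ^ (1 - r⁻¹) := by
    rw [ENNReal.mul_rpow_of_nonneg _ _ (by positivity), ENNReal.rpow_rpow_inv hr0.ne', mul_assoc,
      ← ENNReal.rpow_add_of_nonneg _ _ (by positivity) hr1, add_sub_cancel, ENNReal.rpow_one]
  have hHolder := ENNReal.lintegral_mul_norm_pow_le (μ := μ) ((hF.pow_const r).mul hw) hw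
    (inv_nonneg.2 hr0.le) hr1 (add_sub_cancel r⁻¹ 1)
  calc (∫⁻ y, F y * w y ∂μ) ^ r
      ≤ ((∫⁻ y, F y ^ r * w y ∂μ) ^ r⁻¹ * (∫⁻ y, w y ∂μ) ^ (1 - r⁻¹)) ^ r := by
        simp_rw [hsplit]
        gcongr
        exact hHolder
    _ = (∫⁻ y, w y ∂μ) ^ (r - 1) * ∫⁻ y, F y ^ r * w y ∂μ := by
        rw [ENNReal.mul_rpow_of_nonneg _ _ hr0.le, ENNReal.rpow_inv_rpow hr0.ne',
          ← ENNReal.rpow_mul, sub_mul, one_mul, inv_mul_cancel₀ hr0.ne', mul_comm]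

theorem lintegral_convolution_rpow_le {G : Type*} [AddGroup G] [MeasurableSpace G]
    [MeasurableAdd G] [MeasurableSub₂ G] {μ : Measure G} [SFinite μ] [μ.IsAddRightInvariant]
    {r : ℝ} (hr : 1 ≤ r) {F w : G → ℝ≥0∞} (hF : Measurable F) (hw : Measurable w) :
    ∫⁻ x, (∫⁻ y, F (x - y) * w y ∂μ) ^ r ∂μ ≤ (∫⁻ y, w y ∂μ) ^ r * ∫⁻ x, F x ^ r ∂μ := by
  have hmeas : Measurable fun z : G × G => F (z.1 - z.2) ^ r * w z.2 := by fun_prop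
  calc ∫⁻ x, (∫⁻ y, F (x - y) * w y ∂μ) ^ r ∂μ
      ≤ ∫⁻ x, (∫⁻ y, w y ∂μ) ^ (r - 1) * ∫⁻ y, F (x - y) ^ r * w y ∂μ ∂μ :=
        lintegral_mono fun x => lintegral_mul_rpow_le hr (by fun_prop) hw.aemeasurable
    _ = (∫⁻ y, w y ∂μ) ^ (r - 1) * ∫⁻ y, ∫⁻ x, F (x - y) ^ r * w y ∂μ ∂μ := by
        rw [lintegral_const_mul _ hmeas.lintegral_prod_right',
          lintegral_lintegral_swap hmeas.aemeasurable]
    _ = (∫⁻ y, w y ∂μ) ^ (r - 1) * ((∫⁻ x, F x ^ r ∂μ) * ∫⁻ y, w y ∂μ) := by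
        rw [← lintegral_const_mul _ hw]
        congr with y
        rw [lintegral_mul_const _ (by fun_prop), lintegral_sub_right_eq_self fun x => F x ^ r]
    _ = (∫⁻ y, w y ∂μ) ^ (r - 1 + 1) * ∫⁻ x, F x ^ r ∂μ := by
        rw [ENNReal.rpow_add_of_nonneg _ _ (by linarith) zero_le_one, ENNReal.rpow_one]
        ring
    _ = _ := by rw [sub_add_cancel]

theorem lintegral_inv_one_add_sq {c : ℝ} (hc : 0 < c) :
    ∫⁻ y : ℝ, ENNReal.ofReal (1 + (c * y) ^ 2)⁻¹ = ENNReal.ofReal (π / c) := by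
  have hint : Integrable fun y : ℝ => (1 + (c * y) ^ 2)⁻¹ :=
    integrable_inv_one_add_sq.comp_mul_left' hc.ne'
  rw [← ofReal_integral_eq_lintegral_ofReal hint
      (Filter.Eventually.of_forall fun y => by positivity),
    Measure.integral_comp_mul_left (fun y : ℝ => (1 + y ^ 2)⁻¹) c, integral_univ_inv_one_add_sq,
    abs_of_pos (inv_pos.2 hc), smul_eq_mul, inv_mul_eq_div]

end Young

section Bessel

variable {ι V : Type*} [Fintype ι] [NormedAddCommGroup V] [InnerProductSpace ℝ V]
  [FiniteDimensional ℝ V] [MeasurableSpace V] [BorelSpace V]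

theorem sum_norm_inner_sq_le_of_pairwise_orthogonal {𝕜 E : Type*} [RCLike 𝕜]
    [NormedAddCommGroup E] [InnerProductSpace 𝕜 E] {U : ι → E}
    (hU : Pairwise fun m m' => inner 𝕜 (U m) (U m') = 0) {R : ℝ} (hR : ∀ m, ‖U m‖ ≤ R) (x : E) :
    ∑ m, ‖inner 𝕜 (U m) x‖ ^ 2 ≤ R ^ 2 * ‖x‖ ^ 2 := by
  classical
  let e : {m // U m ≠ 0} → E := fun m => (‖U m‖⁻¹ : 𝕜) • U m
  have he : Orthonormal 𝕜 e :=
    ⟨fun m => norm_smul_inv_norm m.2, fun m m' hm => by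
      simp only [e, inner_smul_left, inner_smul_right, hU (Subtype.coe_injective.ne hm), mul_zero]⟩
  have hUe (m : {m // U m ≠ 0}) : ‖inner 𝕜 (U m) x‖ ^ 2 ≤ R ^ 2 * ‖inner 𝕜 (e m) x‖ ^ 2 := by
    have : ‖inner 𝕜 (U m) x‖ = ‖U m‖ * ‖inner 𝕜 (e m) x‖ := by
      have := norm_ne_zero_iff.2 m.2
      simp only [e, inner_smul_left, norm_mul, RCLike.norm_conj, norm_inv, norm_algebraMap',
        norm_norm]
      field_simp
    rw [this, mul_pow]
    gcongr
    exact hR m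
  calc ∑ m, ‖inner 𝕜 (U m) x‖ ^ 2 = ∑ m : {m // U m ≠ 0}, ‖inner 𝕜 (U m) x‖ ^ 2 := by
        rw [← Fintype.sum_subtype_add_sum_subtype (fun m => U m ≠ 0), add_eq_left]
        refine Fintype.sum_eq_zero _ fun m => ?_
        rw [not_not.1 m.2, inner_zero_left, norm_zero, zero_pow two_ne_zero]
    _ ≤ R ^ 2 * ∑ m : {m // U m ≠ 0}, ‖inner 𝕜 (e m) x‖ ^ 2 := by
        rw [Finset.mul_sum]
        exact Finset.sum_le_sum fun m _ => hUe m
    _ ≤ R ^ 2 * ‖x‖ ^ 2 := by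
        gcongr
        exact he.sum_inner_products_le x

theorem lintegral_enorm_sq_eq_eLpNorm_sq {α E : Type*} [MeasurableSpace α] [ENorm E]
    {μ : Measure α} (H : α → E) : ∫⁻ y, ‖H y‖ₑ ^ 2 ∂μ = eLpNorm H 2 μ ^ 2 := by
  simpa using (eLpNorm_nnreal_pow_eq_lintegral (f := H) (μ := μ) (two_ne_zero : (2 : ℝ≥0) ≠ 0)).symm

theorem sum_enorm_integral_mul_fourierInv_sq_le {v : ι → 𝓢(V, ℂ)}
    (hv : Pairwise (Disjoint on fun m => support (v m))) {R : ℝ≥0}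
    (hR : ∀ m, eLpNorm (v m) 2 ≤ R) {H : V → ℂ} (hH : MemLp H 2) :
    ∑ m, ‖∫ y, H y * (𝓕⁻ (v m)) y‖ₑ ^ 2 ≤ R ^ 2 * ∫⁻ y, ‖H y‖ₑ ^ 2 := by
  let U : ι → Lp ℂ 2 (volume : Measure V) := fun m => (𝓕⁻ (v m)).toLp 2
  have hU : Pairwise fun m m' => inner ℂ (U m) (U m') = 0 := by
    intro m m' hm
    have hPlancherel := SchwartzMap.inner_fourier_toL2_eq (𝓕⁻ (v m)) (𝓕⁻ (v m'))
    simp only [FourierTransform.fourier_fourierInv_eq] at hPlancherel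
    rw [← hPlancherel, SchwartzMap.inner_toL2_toL2_eq (v m) (v m') volume]
    refine integral_eq_zero_of_ae (.of_forall fun ξ => ?_)
    by_cases h : v m ξ = 0
    · simp [h]
    · simp [disjoint_support_iff.1 (hv hm) h]
  have hUR (m : ι) : ‖U m‖ ≤ R := by
    have := SchwartzMap.norm_fourier_toL2_eq (𝓕⁻ (v m))
    rw [FourierTransform.fourier_fourierInv_eq] at this
    rw [← this, SchwartzMap.norm_toLp]
    exact ENNReal.toReal_le_coe_of_le_coe (hR m)
  have hinner (m : ι) : ‖∫ y, H y * (𝓕⁻ (v m)) y‖ = ‖inner ℂ (U m) (hH.star.toLp)‖ := by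
    rw [← inner_conj_symm, RCLike.norm_conj, L2.inner_def]
    congr 1
    refine integral_congr_ae ?_
    filter_upwards [hH.star.coeFn_toLp, (𝓕⁻ (v m)).coeFn_toLp 2] with y hy hvy
    rw [hy, hvy]
    simp [mul_comm]
  have hBessel := sum_norm_inner_sq_le_of_pairwise_orthogonal hU hUR hH.star.toLp
  simp only [← hinner] at hBessel
  rw [lintegral_enorm_sq_eq_eLpNorm_sq]
  simpa [ENNReal.ofReal_sum_of_nonneg, ENNReal.ofReal_mul, ENNReal.ofReal_pow,
    hH.eLpNorm_ne_top] using ENNReal.ofReal_le_ofReal hBessel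

end Bessel

section FourierMultiplier

open SchwartzMap (fourierMultiplierCLM)

theorem conv_eq_integral_sub_mul (f g : ℝ → ℂ) (x : ℝ) : conv f g x = ∫ y, f (x - y) * g y := by
  rw [conv, ← integral_sub_left_eq_self _ volume x]
  simp only [sub_sub_cancel]

theorem fourier_fourierMultiplierCLM_apply {h : ℝ → ℂ} (hh : h.HasTemperateGrowth)
    (f : 𝓢(ℝ, ℂ)) (ξ : ℝ) : 𝓕 (fourierMultiplierCLM ℂ h f) ξ = h ξ * 𝓕 f ξ := by
  rw [SchwartzMap.fourierMultiplierCLM_apply, FourierTransform.fourier_fourierInv_eq,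
    SchwartzMap.smulLeftCLM_apply_apply hh, smul_eq_mul]

theorem conv_eq_fourierMultiplierCLM (f : 𝓢(ℝ, ℂ)) {v : ℝ → ℂ} (hv : Integrable v)
    (hT : (𝓕 v).HasTemperateGrowth) : conv f v = fourierMultiplierCLM ℂ (𝓕 v) f := by
  have hconv : conv f v = f ⋆[ContinuousLinearMap.mul ℂ ℂ] v := rfl
  have hcont : Continuous (conv f v) := by
    rw [hconv]
    exact BddAbove.continuous_convolution_left_of_integrable _
      ⟨_, forall_mem_range.2 (SchwartzMap.norm_le_seminorm ℝ f)⟩ f.continuous hv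
  have hint : Integrable (conv f v) := f.integrable.integrable_convolution (.mul ℂ ℂ) hv
  have hfourier : 𝓕 (conv f v) = 𝓕 (fourierMultiplierCLM ℂ (𝓕 v) f) := by
    ext ξ
    rw [hconv, Real.fourier_mul_convolution_eq f.integrable hv,
      fourier_fourierMultiplierCLM_apply hT, SchwartzMap.fourier_coe, mul_comm]
  calc conv f v = 𝓕⁻ (𝓕 (conv f v)) := by
        refine (hcont.fourierInv_fourier_eq hint ?_).symm
        rw [hfourier]
        exact SchwartzMap.integrable _
    _ = fourierMultiplierCLM ℂ (𝓕 v) f := by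
        rw [hfourier, ← SchwartzMap.fourierInv_coe, FourierTransform.fourierInv_fourier_eq]

theorem fourierMultiplierCLM_eq_integral (h F : 𝓢(ℝ, ℂ)) (x : ℝ) :
    fourierMultiplierCLM ℂ h F x = ∫ y, F (x - y) * (𝓕⁻ h) y := by
  have hh : 𝓕 ⇑(𝓕⁻ h : 𝓢(ℝ, ℂ)) = h := by
    rw [← SchwartzMap.fourier_coe, FourierTransform.fourier_fourierInv_eq]
  rw [← conv_eq_integral_sub_mul,
    conv_eq_fourierMultiplierCLM F (𝓕⁻ h).integrable (hh ▸ h.hasTemperateGrowth), hh]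

theorem fourierInv_derivCLM_apply (h : 𝓢(ℝ, ℂ)) (y : ℝ) :
    (𝓕⁻ (SchwartzMap.derivCLM ℂ ℂ h)) y = -(2 * π * Complex.I * y) * (𝓕⁻ h) y := by
  have hderiv : LineDeriv.lineDerivOp (1 : ℝ) h = SchwartzMap.derivCLM ℂ ℂ h := by
    ext x
    simp [SchwartzMap.lineDerivOp_apply_eq_fderiv]
  rw [← hderiv, SchwartzMap.fourierInv_lineDerivOp_eq, _root_.smul_apply,
    SchwartzMap.smulLeftCLM_apply_apply (by fun_prop)]
  simp
  ring

end FourierMultiplier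

section SquareFunction

open SchwartzMap (fourierMultiplierCLM)

variable {ι : Type*} [Fintype ι] {h : ι → 𝓢(ℝ, ℂ)} {l : ℝ} {R : ℝ≥0}

theorem norm_one_sub_two_pi_I_mul_sq (t : ℝ) :
    ‖1 - 2 * π * Complex.I * t‖ ^ 2 = 1 + (2 * π * t) ^ 2 := by
  have hre : 1 - 2 * π * Complex.I * t = ((1 : ℝ) : ℂ) + (-(2 * π * t) : ℝ) * Complex.I := by
    push_cast
    ring
  rw [hre, ← Complex.normSq_eq_norm_sq, Complex.normSq_add_mul_I]
  ring

theorem fourierInv_add_smul_derivCLM_apply (h : 𝓢(ℝ, ℂ)) (l y : ℝ) :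
    (𝓕⁻ (h + (l : ℂ) • SchwartzMap.derivCLM ℂ ℂ h)) y =
      (1 - 2 * π * Complex.I * (l * y : ℝ)) * (𝓕⁻ h) y := by
  rw [FourierTransform.fourierInv_add, FourierTransform.fourierInv_smul, _root_.add_apply,
    _root_.smul_apply, fourierInv_derivCLM_apply, smul_eq_mul]
  push_cast
  ring

theorem support_add_smul_derivCLM_subset (h : 𝓢(ℝ, ℂ)) (l : ℝ) :
    support (h + (l : ℂ) • SchwartzMap.derivCLM ℂ ℂ h) ⊆ tsupport h :=
  (support_add _ _).trans (union_subset (subset_tsupport _)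
    ((support_const_smul_subset _ _).trans support_deriv_subset))

theorem memLp_two_comp_sub_mul (F : 𝓢(ℝ, ℂ)) (x : ℝ) {w : ℝ → ℂ} (hw : Continuous w)
    (hw1 : ∀ y, ‖w y‖ ≤ 1) : MemLp (fun y => F (x - y) * w y) 2 := by
  refine ((F.memLp 2).comp_measurePreserving (Measure.measurePreserving_sub_left volume x)).mono
    (Continuous.aestronglyMeasurable (by fun_prop)) (.of_forall fun y => ?_)
  rw [norm_mul]
  exact mul_le_of_le_one_right (norm_nonneg _) (hw1 y)

/-- Multiplication of the kernel `𝓕⁻ h` by `1 - 2πily` turns `h` into `h + l h'`, so dividing `F` by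
the same factor makes Bessel's inequality produce an integrable weight. -/
theorem sum_enorm_fourierMultiplierCLM_sq_le
    (hdisj : Pairwise (Disjoint on fun m => tsupport (h m)))
    (hR : ∀ m, eLpNorm (fun ξ => h m ξ + l * deriv (h m) ξ) 2 ≤ R) (F : 𝓢(ℝ, ℂ)) (x : ℝ) :
    ∑ m, ‖fourierMultiplierCLM ℂ (h m) F x‖ₑ ^ 2 ≤
      R ^ 2 * ∫⁻ y, ‖F (x - y)‖ₑ ^ 2 * ENNReal.ofReal (1 + (2 * π * l * y) ^ 2)⁻¹ := by
  let d : ℝ → ℂ := fun y => 1 - 2 * π * Complex.I * (l * y : ℝ)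
  have hd (y : ℝ) : ‖d y‖ ^ 2 = 1 + (2 * π * l * y) ^ 2 := by
    rw [norm_one_sub_two_pi_I_mul_sq, mul_assoc _ l y]
  have hd1 (y : ℝ) : 1 ≤ ‖d y‖ :=
    (one_le_sq_iff₀ (norm_nonneg _)).1 (by rw [hd]; linarith [sq_nonneg (2 * π * l * y)])
  have hd0 (y : ℝ) : d y ≠ 0 := norm_pos_iff.1 (one_pos.trans_le (hd1 y))
  have hH : MemLp (fun y => F (x - y) * (d y)⁻¹) 2 :=
    memLp_two_comp_sub_mul F x (Continuous.inv₀ (by fun_prop) hd0)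
      fun y => (norm_inv (d y)).trans_le (inv_le_one_of_one_le₀ (hd1 y))
  let v : ι → 𝓢(ℝ, ℂ) := fun m => h m + (l : ℂ) • SchwartzMap.derivCLM ℂ ℂ (h m)
  have hv : Pairwise (Disjoint on fun m => support (v m)) := fun m m' hm =>
    (hdisj hm).mono (support_add_smul_derivCLM_subset _ _) (support_add_smul_derivCLM_subset _ _)
  have hvR (m : ι) : eLpNorm (v m) 2 ≤ R := hR m
  have hkernel (m : ι) (y : ℝ) : F (x - y) * (𝓕⁻ (h m)) y = F (x - y) * (d y)⁻¹ * (𝓕⁻ (v m)) y := by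
    rw [fourierInv_add_smul_derivCLM_apply, mul_assoc, inv_mul_cancel_left₀ (hd0 y)]
  simp only [fourierMultiplierCLM_eq_integral, hkernel]
  refine (sum_enorm_integral_mul_fourierInv_sq_le hv hvR hH).trans_eq
    (congrArg _ (lintegral_congr fun y => ?_))
  rw [enorm_mul, mul_pow, ← hd, ← ofReal_norm (d y)⁻¹, norm_inv,
    ← ENNReal.ofReal_pow (by positivity), inv_pow]

theorem lintegral_sum_enorm_fourierMultiplierCLM_rpow_le (hl : 0 < l)
    (hdisj : Pairwise (Disjoint on fun m => tsupport (h m)))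
    (hR : ∀ m, eLpNorm (fun ξ => h m ξ + l * deriv (h m) ξ) 2 ≤ R) {p : ℝ} (hp : 2 ≤ p)
    (F : 𝓢(ℝ, ℂ)) :
    (∫⁻ x, ((∑ m, ‖fourierMultiplierCLM ℂ (h m) F x‖ₑ ^ 2) ^ (1 / 2 : ℝ)) ^ p) ^ (1 / p) ≤
      (R ^ 2 * ENNReal.ofReal (1 / (2 * l))) ^ (1 / 2 : ℝ) * (∫⁻ x, ‖F x‖ₑ ^ p) ^ (1 / p) := by
  have : 0 < p := by linarith
  have hweight : ∫⁻ y : ℝ, ENNReal.ofReal (1 + (2 * π * l * y) ^ 2)⁻¹ =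
      ENNReal.ofReal (1 / (2 * l)) := by
    rw [lintegral_inv_one_add_sq (by positivity)]
    congr 1
    field_simp
  have hpow : ∫⁻ x, ((∑ m, ‖fourierMultiplierCLM ℂ (h m) F x‖ₑ ^ 2) ^ (1 / 2 : ℝ)) ^ p ≤
      (R ^ 2 * ENNReal.ofReal (1 / (2 * l))) ^ (p / 2) * ∫⁻ x, ‖F x‖ₑ ^ p := by
    calc ∫⁻ x, ((∑ m, ‖fourierMultiplierCLM ℂ (h m) F x‖ₑ ^ 2) ^ (1 / 2 : ℝ)) ^ p
        ≤ ∫⁻ x, (R ^ 2 : ℝ≥0∞) ^ (p / 2) * (∫⁻ y, ‖F (x - y)‖ₑ ^ 2 *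
            ENNReal.ofReal (1 + (2 * π * l * y) ^ 2)⁻¹) ^ (p / 2) := by
          gcongr with x
          rw [← ENNReal.rpow_mul, one_div_mul_eq_div,
            ← ENNReal.mul_rpow_of_nonneg _ _ (by positivity)]
          gcongr
          exact sum_enorm_fourierMultiplierCLM_sq_le hdisj hR F x
      _ ≤ (R ^ 2 : ℝ≥0∞) ^ (p / 2) * (ENNReal.ofReal (1 / (2 * l)) ^ (p / 2) *
            ∫⁻ x, (‖F x‖ₑ ^ 2) ^ (p / 2)) := by
          rw [lintegral_const_mul' _ _
            (ENNReal.rpow_ne_top_of_nonneg (by positivity) (by simp)), ← hweight]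
          gcongr
          exact lintegral_convolution_rpow_le (F := fun x => ‖F x‖ₑ ^ 2) (by linarith)
            (F.continuous.enorm.measurable.pow_const 2) (by fun_prop)
      _ = _ := by
          rw [ENNReal.mul_rpow_of_nonneg _ _ (by positivity), mul_assoc]
          simp_rw [← ENNReal.rpow_natCast, ← ENNReal.rpow_mul]
          norm_num [mul_div_cancel₀]
  calc _ ≤ ((R ^ 2 * ENNReal.ofReal (1 / (2 * l))) ^ (p / 2) * ∫⁻ x, ‖F x‖ₑ ^ p) ^ (1 / p) := by
        gcongr
    _ = _ := by
        rw [ENNReal.mul_rpow_of_nonneg _ _ (by positivity), ← ENNReal.rpow_mul]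
        congr 2
        field_simp

end SquareFunction

section Blocks

open SchwartzMap (fourierMultiplierCLM)

/-- The Littlewood–Paley bump built from a cutoff `P` that is `1` near the origin: if `P = 𝓕 Φ`,
then `ξ ↦ annularBump P (ξ / 2 ^ j)` is the Fourier transform of `psi Φ j`. -/
noncomputable def annularBump (P : ℝ → ℂ) (t : ℝ) : ℂ := P t - P (2 * t)

/-- The Fourier multiplier that maps `f` to the block `g_m ∗ ψ_j` of the rotated piece of `[a, b]`,
up to the unimodular factor of the rotation; here `g = 𝓕 φ`, `P = 𝓕 Φ` and `X = 2 ^ j`. -/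
noncomputable def blockSymbol (g P : ℝ → ℂ) (a b X ξ : ℝ) : ℂ :=
  g ((ξ - a) / (b - a)) * annularBump P ((ξ - a) / X)

theorem hasTemperateGrowth_comp_sub_div (h : 𝓢(ℝ, ℂ)) (a c : ℝ) :
    (fun ξ => h ((ξ - a) / c)).HasTemperateGrowth := by
  simp_rw [div_eq_mul_inv]
  fun_prop

theorem hasTemperateGrowth_annularBump (P : 𝓢(ℝ, ℂ)) (a c : ℝ) :
    (fun ξ => annularBump P ((ξ - a) / c)).HasTemperateGrowth := by
  simp_rw [annularBump, div_eq_mul_inv]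
  fun_prop

theorem e2pi_eq_fourierChar (t : ℝ) : e2pi t = 𝐞 t := by
  rw [e2pi, Real.fourierChar_apply]
  push_cast
  ring_nf

theorem e2pi_add (s t : ℝ) : e2pi (s + t) = e2pi s * e2pi t := by
  simp only [e2pi_eq_fourierChar, AddChar.map_add_eq_mul, Circle.coe_mul]

theorem norm_e2pi (t : ℝ) : ‖e2pi t‖ = 1 := by
  rw [e2pi_eq_fourierChar, Circle.norm_coe]

theorem integrable_phim (φ : 𝓢(ℝ, ℂ)) {a b : ℝ} (hab : a < b) : Integrable (phim φ a b) := by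
  refine ((φ.integrable.comp_mul_left' (sub_ne_zero.2 hab.ne')).const_mul ((b - a : ℝ) : ℂ)).mono
    (Continuous.aestronglyMeasurable ?_) (.of_forall fun x => ?_)
  · unfold phim e2pi
    fun_prop
  · rw [phim, norm_mul, norm_mul, norm_mul, norm_e2pi, mul_one]

theorem fourier_phim (φ : ℝ → ℂ) {a b : ℝ} (hab : a < b) (ξ : ℝ) :
    𝓕 (phim φ a b) ξ = 𝓕 φ ((ξ - a) / (b - a)) := by
  have hl : 0 < b - a := sub_pos.2 hab
  let η : ℝ := (ξ - a) / (b - a)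
  have hphase (x : ℝ) : (𝐞 (-(x * ξ)) : ℂ) * e2pi (a * x) = 𝐞 (-((b - a) * x * η)) := by
    rw [e2pi_eq_fourierChar, ← Circle.coe_mul, ← AddChar.map_add_eq_mul]
    congr 2
    simp only [η]
    field_simp
    ring
  calc 𝓕 (phim φ a b) ξ
      = ((b - a : ℝ) : ℂ) * ∫ x, (𝐞 (-((b - a) * x * η)) : ℂ) * φ ((b - a) * x) := by
        simp only [Real.fourier_real_eq, Circle.smul_def, smul_eq_mul, phim, ← hphase,
          ← integral_const_mul]
        congr with x
        ring
    _ = ∫ y, (𝐞 (-(y * η)) : ℂ) * φ y := by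
        rw [Measure.integral_comp_mul_left (fun y => (𝐞 (-(y * η)) : ℂ) * φ y),
          abs_of_pos (inv_pos.2 hl), Complex.real_smul, Complex.ofReal_inv,
          mul_inv_cancel_left₀ (by exact_mod_cast hl.ne')]
    _ = 𝓕 φ η := by simp only [Real.fourier_real_eq, Circle.smul_def, smul_eq_mul]

theorem e2pi_mul_psi (Φ : ℝ → ℂ) (a : ℝ) (j : ℤ) (x : ℝ) :
    e2pi (a * x) * psi Φ j x = phim Φ a (a + 2 ^ j) x - phim Φ a (a + 2 ^ (j - 1)) x := by
  simp only [psi, phim, add_sub_cancel_left]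
  ring

theorem integrable_e2pi_mul_psi (Φ : 𝓢(ℝ, ℂ)) (a : ℝ) (j : ℤ) :
    Integrable fun x => e2pi (a * x) * psi Φ j x := by
  simp only [e2pi_mul_psi]
  exact (integrable_phim Φ (lt_add_of_pos_right a (zpow_pos two_pos _))).sub
    (integrable_phim Φ (lt_add_of_pos_right a (zpow_pos two_pos _)))

theorem fourier_e2pi_mul_psi (Φ : 𝓢(ℝ, ℂ)) (a : ℝ) (j : ℤ) :
    𝓕 (fun x => e2pi (a * x) * psi Φ j x) =
      fun ξ => annularBump (𝓕 Φ : 𝓢(ℝ, ℂ)) ((ξ - a) / 2 ^ j) := by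
  ext ξ
  have hlt (k : ℤ) : a < a + 2 ^ k := lt_add_of_pos_right a (zpow_pos two_pos k)
  have hchar {v : ℝ → ℂ} (hv : Integrable v) : Integrable fun x => 𝐞 (-(x * ξ)) • v x := by
    simpa [mul_comm] using (Real.fourierIntegral_convergent_iff ξ).2 hv
  calc 𝓕 (fun x => e2pi (a * x) * psi Φ j x) ξ
      = 𝓕 (phim Φ a (a + 2 ^ j)) ξ - 𝓕 (phim Φ a (a + 2 ^ (j - 1))) ξ := by
        simp only [Real.fourier_real_eq, e2pi_mul_psi, smul_sub]
        exact integral_sub (hchar (integrable_phim Φ (hlt j)))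
          (hchar (integrable_phim Φ (hlt (j - 1))))
    _ = annularBump (𝓕 Φ : 𝓢(ℝ, ℂ)) ((ξ - a) / 2 ^ j) := by
        rw [fourier_phim _ (hlt _), fourier_phim _ (hlt _), annularBump, SchwartzMap.fourier_coe,
          add_sub_cancel_left, add_sub_cancel_left, zpow_sub_one₀ two_ne_zero]
        field_simp

theorem conv_e2pi_mul (a : ℝ) (u v : ℝ → ℂ) (x : ℝ) :
    conv (fun t => e2pi (-(a * t)) * u t) v x =
      e2pi (-(a * x)) * conv u (fun y => e2pi (a * y) * v y) x := by
  rw [conv, conv, ← integral_const_mul]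
  congr with t
  have : e2pi (-(a * t)) = e2pi (-(a * x)) * e2pi (a * (x - t)) := by
    rw [← e2pi_add]
    ring_nf
  rw [this]
  ring

theorem conv_psi (f Φ : 𝓢(ℝ, ℂ)) (j : ℤ) :
    conv f (psi Φ j) =
      fourierMultiplierCLM ℂ (fun ξ => annularBump (𝓕 Φ : 𝓢(ℝ, ℂ)) (ξ / 2 ^ j)) f := by
  have hpsi : psi Φ j = fun x => e2pi (0 * x) * psi Φ j x := by
    ext x
    simp [e2pi]
  have hfourier : 𝓕 (psi Φ j) = fun ξ => annularBump (𝓕 Φ : 𝓢(ℝ, ℂ)) (ξ / 2 ^ j) := by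
    rw [hpsi, fourier_e2pi_mul_psi]
    simp only [sub_zero]
  rw [← hfourier]
  refine conv_eq_fourierMultiplierCLM f (hpsi ▸ integrable_e2pi_mul_psi Φ 0 j) ?_
  rw [hfourier]
  simpa only [sub_zero] using hasTemperateGrowth_annularBump (𝓕 Φ) 0 (2 ^ j)

theorem norm_conv_rotConv_psi (φ Φ f : 𝓢(ℝ, ℂ)) {a b : ℝ} (hab : a < b) (j : ℤ) (x : ℝ) :
    ‖conv (rotConv φ a b f) (psi Φ j) x‖ = ‖fourierMultiplierCLM ℂ
      (blockSymbol (𝓕 φ : 𝓢(ℝ, ℂ)) (𝓕 Φ : 𝓢(ℝ, ℂ)) a b (2 ^ j)) f x‖ := by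
  have hg : 𝓕 (phim φ a b) = fun ξ => (𝓕 φ : 𝓢(ℝ, ℂ)) ((ξ - a) / (b - a)) :=
    funext (fourier_phim φ hab)
  have hgT := hasTemperateGrowth_comp_sub_div (𝓕 φ) a (b - a)
  have hbT := hasTemperateGrowth_annularBump (𝓕 Φ) a (2 ^ j)
  have hconv : conv f (phim φ a b) = _ :=
    conv_eq_fourierMultiplierCLM f (integrable_phim φ hab) (hg ▸ hgT)
  unfold rotConv blockSymbol
  rw [conv_e2pi_mul, norm_mul, norm_e2pi, one_mul, hconv,
    conv_eq_fourierMultiplierCLM _ (integrable_e2pi_mul_psi Φ a j)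
      (fourier_e2pi_mul_psi Φ a j ▸ hbT), fourier_e2pi_mul_psi, hg,
    SchwartzMap.fourierMultiplierCLM_fourierMultiplierCLM_apply hbT hgT]
  simp only [Pi.mul_def, mul_comm]

end Blocks

section LittlewoodPaley

open Filter Topology
open SchwartzMap (fourierMultiplierCLM)

theorem fourierMultiplierCLM_eq_integral_fourierChar {h : ℝ → ℂ} (hh : h.HasTemperateGrowth)
    (u : 𝓢(ℝ, ℂ)) (x : ℝ) : fourierMultiplierCLM ℂ h u x = ∫ ξ, 𝐞 (ξ * x) • (h ξ * 𝓕 u ξ) := by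
  rw [SchwartzMap.fourierMultiplierCLM_apply, SchwartzMap.fourierInv_coe, Real.fourierInv_eq]
  congr with ξ
  rw [SchwartzMap.smulLeftCLM_apply_apply hh, smul_eq_mul, RCLike.inner_apply, conj_trivial,
    mul_comm x]

theorem tendsto_fourierMultiplierCLM_of_bounded {h : ℕ → ℝ → ℂ} {h₀ : ℝ → ℂ} {B : ℝ}
    (hh : ∀ n, (h n).HasTemperateGrowth) (hh₀ : h₀.HasTemperateGrowth) (hB : ∀ n ξ, ‖h n ξ‖ ≤ B)
    (hlim : ∀ᵐ ξ, Tendsto (fun n => h n ξ) atTop (𝓝 (h₀ ξ))) (u : 𝓢(ℝ, ℂ)) (x : ℝ) :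
    Tendsto (fun n => fourierMultiplierCLM ℂ (h n) u x) atTop
      (𝓝 (fourierMultiplierCLM ℂ h₀ u x)) := by
  simp only [fourierMultiplierCLM_eq_integral_fourierChar (hh _),
    fourierMultiplierCLM_eq_integral_fourierChar hh₀]
  refine tendsto_integral_of_dominated_convergence (fun ξ => B * ‖𝓕 u ξ‖) (fun n => ?_)
    ((𝓕 u).integrable.norm.const_mul B) (fun n => .of_forall fun ξ => ?_) ?_
  · have := (hh n).1.continuous
    exact Continuous.aestronglyMeasurable (by fun_prop)
  · rw [Circle.norm_smul, norm_mul]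
    gcongr
    exact hB n ξ
  · filter_upwards [hlim] with ξ hξ
    exact (hξ.mul_const _).const_smul _

theorem sum_range_annularBump (P : ℝ → ℂ) (K : ℕ) (ξ : ℝ) :
    ∑ n ∈ Finset.range (2 * K), annularBump P (ξ / 2 ^ ((n : ℤ) - K)) =
      P (2 * ξ / 2 ^ K) - P (2 * ξ * 2 ^ K) := by
  calc ∑ n ∈ Finset.range (2 * K), annularBump P (ξ / 2 ^ ((n : ℤ) - K))
      = ∑ n ∈ Finset.range (2 * K), (P (2 * ξ / 2 ^ (((n + 1 : ℕ) : ℤ) - K)) -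
          P (2 * ξ / 2 ^ ((n : ℤ) - K))) := by
        refine Finset.sum_congr rfl fun n _ => ?_
        rw [annularBump, Nat.cast_succ, add_sub_right_comm, zpow_add_one₀ two_ne_zero]
        field_simp
    _ = P (2 * ξ / 2 ^ K) - P (2 * ξ * 2 ^ K) := by
        rw [Finset.sum_range_sub fun n : ℕ => P (2 * ξ / 2 ^ ((n : ℤ) - K))]
        simp [two_mul]

theorem tendsto_sum_range_annularBump {P : 𝓢(ℝ, ℂ)} (hP : P 0 = 1) {ξ : ℝ} (hξ : ξ ≠ 0) :
    Tendsto (fun K : ℕ => ∑ n ∈ Finset.range (2 * K), annularBump P (ξ / 2 ^ ((n : ℤ) - K))) atTop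
      (𝓝 1) := by
  simp only [sum_range_annularBump]
  have hpow : Tendsto (fun K : ℕ => (2 : ℝ) ^ K) atTop atTop :=
    tendsto_pow_atTop_atTop_of_one_lt one_lt_two
  have hlow : Tendsto (fun K : ℕ => P (2 * ξ / 2 ^ K)) atTop (𝓝 1) :=
    hP ▸ (P.continuous.tendsto 0).comp (hpow.const_div_atTop (2 * ξ))
  have hhigh : Tendsto (fun K : ℕ => P (2 * ξ * 2 ^ K)) atTop (𝓝 0) := by
    have hmul := (Homeomorph.mulLeft₀ (2 * ξ) (by simpa using hξ)).isClosedEmbedding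
    exact (zero_at_infty P).comp (hmul.tendsto_cocompact.comp (hpow.mono_right atTop_le_cocompact))
  simpa using hlow.sub hhigh

theorem enorm_le_tsum_enorm_fourierMultiplierCLM {P : 𝓢(ℝ, ℂ)} (hP : P 0 = 1) (u : 𝓢(ℝ, ℂ))
    (x : ℝ) :
    ‖u x‖ₑ ≤ ∑' k : ℤ, ‖fourierMultiplierCLM ℂ (fun ξ => annularBump P (ξ / 2 ^ k)) u x‖ₑ := by
  let Q : ℤ → ℝ → ℂ := fun k ξ => annularBump P (ξ / 2 ^ k)
  let S : ℕ → ℝ → ℂ := fun K ξ => ∑ n ∈ Finset.range (2 * K), Q (n - K) ξ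
  have hQ (k : ℤ) : (Q k).HasTemperateGrowth := by
    simpa only [sub_zero] using hasTemperateGrowth_annularBump P 0 (2 ^ k)
  have hS (K : ℕ) : (S K).HasTemperateGrowth := .sum fun n _ => hQ (n - K)
  have hSB (K : ℕ) (ξ : ℝ) :
      ‖S K ξ‖ ≤ SchwartzMap.seminorm ℝ 0 0 P + SchwartzMap.seminorm ℝ 0 0 P := by
    simp only [S, Q, sum_range_annularBump]
    exact (norm_sub_le _ _).trans
      (add_le_add (SchwartzMap.norm_le_seminorm ℝ P _) (SchwartzMap.norm_le_seminorm ℝ P _))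
  have hlim : Tendsto (fun K => fourierMultiplierCLM ℂ (S K) u x) atTop (𝓝 (u x)) := by
    have := tendsto_fourierMultiplierCLM_of_bounded hS (.const (1 : ℂ)) hSB
      ((Measure.ae_ne volume 0).mono fun ξ hξ => tendsto_sum_range_annularBump hP hξ) u x
    simpa using this
  refine le_of_tendsto hlim.enorm (.of_forall fun K => ?_)
  calc ‖fourierMultiplierCLM ℂ (S K) u x‖ₑ
      = ‖∑ n ∈ Finset.range (2 * K), fourierMultiplierCLM ℂ (Q (n - K)) u x‖ₑ := by
        rw [SchwartzMap.fourierMultiplierCLM_sum ℂ fun (n : ℕ) _ => hQ (n - K)]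
        simp
    _ ≤ ∑ n ∈ Finset.range (2 * K), ‖fourierMultiplierCLM ℂ (Q (n - K)) u x‖ₑ := enorm_sum_le _ _
    _ ≤ ∑' n : ℕ, ‖fourierMultiplierCLM ℂ (Q (n - K)) u x‖ₑ := ENNReal.sum_le_tsum _
    _ ≤ ∑' k : ℤ, ‖fourierMultiplierCLM ℂ (Q k) u x‖ₑ :=
        ENNReal.tsum_comp_le_tsum_of_injective
          ((sub_left_injective (b := (K : ℤ))).comp Nat.cast_injective)
          fun k => ‖fourierMultiplierCLM ℂ (Q k) u x‖ₑ

theorem support_annularBump_subset {P : ℝ → ℂ} (hP : support P ⊆ Icc (-2) 2) :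
    support (annularBump P) ⊆ Icc (-2) 2 := by
  refine (support_sub _ _).trans (union_subset hP fun t ht => ?_)
  constructor <;> linarith [(hP ht).1, (hP ht).2]

theorem annularBump_mul_div_two {P : ℝ → ℂ} (hP₁ : ∀ ξ ∈ Icc (-1) 1, P ξ = 1)
    (hP₂ : support P ⊆ Icc (-2) 2) (t : ℝ) : annularBump P t * P (t / 2) = annularBump P t := by
  by_cases ht : annularBump P t = 0
  · rw [ht, zero_mul]
  · obtain ⟨hlower, hupper⟩ := support_annularBump_subset hP₂ ht
    rw [hP₁ (t / 2) ⟨by linarith, by linarith⟩, mul_one]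

end LittlewoodPaley

section ScaledNorm

variable {h k : ℝ → ℂ} {Z Z' ξ : ℝ}

/-- The pointwise `C¹` size of `h` at frequency scale `Z`; it is submultiplicative and invariant
under a common dilation of `h` and `Z`. -/
noncomputable def scaledNorm (Z : ℝ) (h : ℝ → ℂ) (ξ : ℝ) : ℝ := ‖h ξ‖ + Z * ‖deriv h ξ‖

theorem scaledNorm_nonneg (hZ : 0 ≤ Z) : 0 ≤ scaledNorm Z h ξ := by
  unfold scaledNorm
  positivity

theorem scaledNorm_mono (hZ : Z ≤ Z') : scaledNorm Z h ξ ≤ scaledNorm Z' h ξ := by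
  unfold scaledNorm
  gcongr

theorem scaledNorm_mul_le (hZ : 0 ≤ Z) (hh : DifferentiableAt ℝ h ξ)
    (hk : DifferentiableAt ℝ k ξ) :
    scaledNorm Z (fun ξ => h ξ * k ξ) ξ ≤ scaledNorm Z h ξ * scaledNorm Z k ξ := by
  have hderiv : ‖deriv h ξ * k ξ + h ξ * deriv k ξ‖ ≤
      ‖deriv h ξ‖ * ‖k ξ‖ + ‖h ξ‖ * ‖deriv k ξ‖ := by
    simpa only [norm_mul] using norm_add_le (deriv h ξ * k ξ) (h ξ * deriv k ξ)
  calc scaledNorm Z (fun ξ => h ξ * k ξ) ξ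
      = ‖h ξ‖ * ‖k ξ‖ + Z * ‖deriv h ξ * k ξ + h ξ * deriv k ξ‖ := by
        rw [scaledNorm, deriv_fun_mul hh hk, norm_mul]
    _ ≤ ‖h ξ‖ * ‖k ξ‖ + Z * (‖deriv h ξ‖ * ‖k ξ‖ + ‖h ξ‖ * ‖deriv k ξ‖) := by gcongr
    _ ≤ ‖h ξ‖ * ‖k ξ‖ + Z * (‖deriv h ξ‖ * ‖k ξ‖ + ‖h ξ‖ * ‖deriv k ξ‖) +
        Z ^ 2 * (‖deriv h ξ‖ * ‖deriv k ξ‖) := le_add_of_nonneg_right (by positivity)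
    _ = scaledNorm Z h ξ * scaledNorm Z k ξ := by
        simp only [scaledNorm]
        ring

theorem scaledNorm_comp_sub_div (Z : ℝ) (h : ℝ → ℂ) (a : ℝ) {c : ℝ} (hc : 0 < c) (ξ : ℝ) :
    scaledNorm Z (fun ξ => h ((ξ - a) / c)) ξ = scaledNorm (Z / c) h ((ξ - a) / c) := by
  have hderiv : deriv (fun ξ => h ((ξ - a) / c)) ξ = c⁻¹ • deriv h ((ξ - a) / c) := by
    simp only [div_eq_inv_mul]
    rw [deriv_comp_sub_const (f := fun ξ => h (c⁻¹ * ξ)), deriv_comp_mul_left]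
  rw [scaledNorm, scaledNorm, hderiv, norm_smul, norm_inv, Real.norm_of_nonneg hc.le]
  ring

theorem exists_scaledNorm_le (hh : ContDiff ℝ 1 h) (hc : HasCompactSupport h) (Z : ℝ) :
    ∃ A, ∀ ξ, scaledNorm Z h ξ ≤ A := by
  have hcont : Continuous (scaledNorm Z h) :=
    hh.continuous.norm.add ((hh.continuous_deriv le_rfl).norm.const_mul Z)
  have hsupp : HasCompactSupport (scaledNorm Z h) :=
    hc.norm.add (hc.deriv.norm.mul_left (f := fun _ => Z))
  obtain ⟨A, hA⟩ := hsupp.exists_bound_of_continuous hcont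
  exact ⟨A, fun ξ => (le_abs_self _).trans (hA ξ)⟩

theorem scaledNorm_eq_zero_of_notMem_tsupport (hξ : ξ ∉ tsupport h) : scaledNorm Z h ξ = 0 := by
  have hderiv : deriv h ξ = 0 := notMem_support.1 fun h' => hξ (support_deriv_subset h')
  rw [scaledNorm, image_eq_zero_of_notMem_tsupport hξ, hderiv, norm_zero, mul_zero, add_zero]

theorem eLpNorm_add_mul_deriv_le {l A : ℝ} (hl : 0 ≤ l) (hA : ∀ ξ, scaledNorm l h ξ ≤ A) :
    eLpNorm (fun ξ => h ξ + l * deriv h ξ) 2 ≤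
      volume (tsupport h) ^ (1 / 2 : ℝ) * ENNReal.ofReal A := by
  have hsupp : support (fun ξ => h ξ + l * deriv h ξ) ⊆ tsupport h := by
    intro ξ hξ
    contrapose! hξ
    have hderiv : deriv h ξ = 0 := notMem_support.1 fun h' => hξ (support_deriv_subset h')
    rw [notMem_support, image_eq_zero_of_notMem_tsupport hξ, hderiv, mul_zero, add_zero]
  rw [← eLpNorm_restrict_eq_of_support_subset hsupp]
  refine (eLpNorm_le_of_ae_bound (C := A) (.of_forall fun ξ => ?_)).trans (by simp)
  refine (norm_add_le _ _).trans ((le_of_eq ?_).trans (hA ξ))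
  rw [norm_mul, Complex.norm_real, Real.norm_of_nonneg hl, scaledNorm]

end ScaledNorm

section Vanishing

theorem exists_norm_le_mul_sub_pow {F : Type*} [NormedAddCommGroup F] [NormedSpace ℝ F] (M : ℕ)
    {c : ℝ} (g : 𝓢(ℝ, F)) (hg : support g ⊆ Iic c) :
    ∃ C, 0 ≤ C ∧ ∀ t ≤ c, ‖g t‖ ≤ C * (c - t) ^ M := by
  induction M generalizing g with
  | zero =>
    exact ⟨SchwartzMap.seminorm ℝ 0 0 g, apply_nonneg _ _,
      fun t _ => by simpa using SchwartzMap.norm_le_seminorm ℝ g t⟩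
  | succ M ih =>
    have hg' : tsupport g ⊆ Iic c := closure_minimal hg isClosed_Iic
    obtain ⟨C, hC, hderiv⟩ := ih (SchwartzMap.derivCLM ℝ F g) (support_deriv_subset.trans hg')
    have hgc : g c = 0 := by
      refine notMem_support.1 fun hc => ?_
      have := interior_maximal hg g.continuous.isOpen_support hc
      rw [interior_Iic] at this
      exact lt_irrefl c this
    refine ⟨C, hC, fun t ht => ?_⟩
    have hmvt : ‖g c - g t‖ ≤ C * (c - t) ^ M * ‖c - t‖ :=
      (convex_Icc t c).norm_image_sub_le_of_norm_deriv_le (fun x _ => g.differentiableAt)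
        (fun x hx => (hderiv x hx.2).trans (by gcongr; exacts [sub_nonneg.2 hx.2, hx.1]))
        (left_mem_Icc.2 ht) (right_mem_Icc.2 ht)
    rwa [hgc, zero_sub, norm_neg, Real.norm_of_nonneg (sub_nonneg.2 ht), mul_assoc,
      ← pow_succ] at hmvt

theorem exists_scaledNorm_le_mul_sub_pow (M : ℕ) {c Z : ℝ} (hZ : 0 ≤ Z) (g : 𝓢(ℝ, ℂ))
    (hg : support g ⊆ Iic c) :
    ∃ C, 0 ≤ C ∧ ∀ t ≤ c, scaledNorm Z g t ≤ C * (c - t) ^ M := by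
  have hg' : support (deriv g) ⊆ Iic c :=
    support_deriv_subset.trans (closure_minimal hg isClosed_Iic)
  obtain ⟨C₀, hC₀, hval⟩ := exists_norm_le_mul_sub_pow M g hg
  obtain ⟨C₁, hC₁, hderiv⟩ := exists_norm_le_mul_sub_pow M (SchwartzMap.derivCLM ℝ ℂ g) hg'
  refine ⟨C₀ + Z * C₁, by positivity, fun t ht => ?_⟩
  calc scaledNorm Z g t ≤ C₀ * (c - t) ^ M + Z * (C₁ * (c - t) ^ M) := by
        unfold scaledNorm
        gcongr
        exacts [hval t ht, hderiv t ht]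
    _ = (C₀ + Z * C₁) * (c - t) ^ M := by ring

end Vanishing

section TruncatedSymbol

open SchwartzMap (fourierMultiplierCLM)

variable {a b X Y ξ : ℝ}

/-- `blockSymbol` cut off at frequencies `|ξ| ≲ Y`; it has the same action as `blockSymbol` on a
function whose frequencies are of size `Y`. -/
noncomputable def truncatedSymbol (g P : ℝ → ℂ) (a b X Y ξ : ℝ) : ℂ :=
  blockSymbol g P a b X ξ * P (ξ / (2 * Y))

section Support

variable {g P : ℝ → ℂ}

theorem mem_Icc_of_annularBump_ne_zero (hP₁ : ∀ ξ ∈ Icc (-1) 1, P ξ = 1)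
    (hP₂ : support P ⊆ Icc (-2) 2) {t : ℝ} (ht₀ : 0 ≤ t) (ht : annularBump P t ≠ 0) :
    t ∈ Icc (1 / 2) 2 := by
  refine ⟨?_, (support_annularBump_subset hP₂ ht).2⟩
  contrapose! ht
  rw [annularBump, hP₁ _ (by constructor <;> linarith), hP₁ _ (by constructor <;> linarith),
    sub_self]

theorem tsupport_truncatedSymbol_subset (hg : support g ⊆ Icc 0 1)
    (hP₁ : ∀ ξ ∈ Icc (-1) 1, P ξ = 1) (hP₂ : support P ⊆ Icc (-2) 2)
    (hab : a < b) (hX : 0 < X) (hY : 0 < Y) :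
    tsupport (truncatedSymbol g P a b X Y) ⊆
      Icc a b ∩ Icc (a + X / 2) (a + 2 * X) ∩ Icc (-(4 * Y)) (4 * Y) := by
  refine closure_minimal (fun ξ hξ => ?_) ((isClosed_Icc.inter isClosed_Icc).inter isClosed_Icc)
  rw [mem_support, truncatedSymbol, blockSymbol, mul_ne_zero_iff, mul_ne_zero_iff] at hξ
  obtain ⟨⟨hgξ, hBξ⟩, hPξ⟩ := hξ
  have hl : 0 < b - a := sub_pos.2 hab
  obtain ⟨h₀, h₁⟩ := hg hgξ
  rw [le_div_iff₀ hl, zero_mul] at h₀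
  rw [div_le_one hl] at h₁
  obtain ⟨h₂, h₃⟩ := mem_Icc_of_annularBump_ne_zero hP₁ hP₂ (by positivity) hBξ
  rw [le_div_iff₀ hX] at h₂
  rw [div_le_iff₀ hX] at h₃
  obtain ⟨h₄, h₅⟩ := hP₂ hPξ
  rw [le_div_iff₀ (by positivity)] at h₄
  rw [div_le_iff₀ (by positivity)] at h₅
  refine ⟨⟨⟨?_, ?_⟩, ?_, ?_⟩, ?_, ?_⟩ <;> linarith

theorem volume_tsupport_truncatedSymbol_le (hg : support g ⊆ Icc 0 1)
    (hP₁ : ∀ ξ ∈ Icc (-1) 1, P ξ = 1) (hP₂ : support P ⊆ Icc (-2) 2)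
    (hab : a < b) (hX : 0 < X) (hY : 0 < Y) :
    volume (tsupport (truncatedSymbol g P a b X Y)) ≤ ENNReal.ofReal (8 * min X Y) := by
  have hsub := tsupport_truncatedSymbol_subset hg hP₁ hP₂ hab hX hY
  rw [mul_min_of_nonneg _ _ (by norm_num), ENNReal.ofReal_min, le_min_iff]
  constructor
  · refine (measure_mono fun ξ hξ => (hsub hξ).1.2).trans ?_
    rw [Real.volume_Icc]
    exact ENNReal.ofReal_le_ofReal (by linarith)
  · refine (measure_mono fun ξ hξ => (hsub hξ).2).trans ?_
    rw [Real.volume_Icc]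
    exact ENNReal.ofReal_le_ofReal (by linarith)

end Support

/-- This is where `0 ∉ (a, b)` enters: if `Y ≪ X` then `[a, b]` lies to the left of the origin and
`|ξ| ≲ Y` forces `ξ` to be close to `b`, where `g` vanishes to infinite order. -/
theorem one_sub_div_le_min_div (hab : a < b) (h₀ : (0 : ℝ) ∉ Ioo a b) (hX : 0 < X)
    (hξ : ξ ∈ Icc a b) (hXξ : a + X / 2 ≤ ξ) (hξY : ξ ∈ Icc (-(4 * Y)) (4 * Y)) :
    1 - (ξ - a) / (b - a) ≤ 8 * (min X Y / X) := by
  have hl : 0 < b - a := sub_pos.2 hab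
  have hle_one : 1 - (ξ - a) / (b - a) ≤ 1 :=
    sub_le_self _ (div_nonneg (sub_nonneg.2 hξ.1) hl.le)
  rcases le_total X Y with hXY | hYX
  · rw [min_eq_left hXY, div_self hX.ne']
    linarith
  rw [min_eq_right hYX, ← mul_div_assoc]
  rcases le_or_gt 0 a with ha | ha
  · refine hle_one.trans ((one_le_div hX).2 ?_)
    linarith [hξY.2]
  · have hb : b ≤ 0 := not_lt.1 fun hb => h₀ ⟨ha, hb⟩
    calc 1 - (ξ - a) / (b - a) = (b - ξ) / (b - a) := by
          field_simp
          ring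
      _ ≤ 4 * Y / (X / 2) := by
          gcongr
          · linarith [hξY.1, hξ.2]
          · linarith [hξY.1]
          · linarith [hξ.2]
      _ = 8 * Y / X := by ring

theorem contDiff_annularBump (P : 𝓢(ℝ, ℂ)) (n : ℕ∞) : ContDiff ℝ n (annularBump P) :=
  (P.smooth n).sub ((P.smooth n).comp (contDiff_const.mul contDiff_id))

theorem contDiff_truncatedSymbol (g P : 𝓢(ℝ, ℂ)) (n : ℕ∞) :
    ContDiff ℝ n (truncatedSymbol g P a b X Y) := by
  have hcomp {h : ℝ → ℂ} (hh : ContDiff ℝ n h) (a c : ℝ) :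
      ContDiff ℝ n fun ξ => h ((ξ - a) / c) :=
    hh.comp ((contDiff_id.sub contDiff_const).div_const c)
  unfold truncatedSymbol blockSymbol
  exact ((hcomp (g.smooth n) a (b - a)).mul (hcomp (contDiff_annularBump P n) a X)).mul
    (by simpa only [sub_zero] using hcomp (P.smooth n) 0 (2 * Y))

theorem scaledNorm_truncatedSymbol_le (g P : 𝓢(ℝ, ℂ)) {Z : ℝ} (hZ : 0 ≤ Z) (hab : a < b)
    (hX : 0 < X) (hY : 0 < Y) :
    scaledNorm Z (truncatedSymbol g P a b X Y) ξ ≤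
      scaledNorm (Z / (b - a)) g ((ξ - a) / (b - a)) *
        scaledNorm (Z / X) (annularBump P) ((ξ - a) / X) *
        scaledNorm (Z / (2 * Y)) P (ξ / (2 * Y)) := by
  have hB : Differentiable ℝ (annularBump P) :=
    (contDiff_annularBump P 1).differentiable (by norm_num)
  have hcomp {h : ℝ → ℂ} (hh : Differentiable ℝ h) (a c : ℝ) :
      DifferentiableAt ℝ (fun ξ => h ((ξ - a) / c)) ξ := by fun_prop
  have hgξ := hcomp g.differentiable a (b - a)
  have hBξ := hcomp hB a X
  have hPξ := hcomp P.differentiable 0 (2 * Y)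
  rw [← scaledNorm_comp_sub_div Z g a (sub_pos.2 hab), ← scaledNorm_comp_sub_div Z _ a hX,
    ← sub_zero ξ, ← scaledNorm_comp_sub_div Z P 0 (by positivity), sub_zero]
  refine (scaledNorm_mul_le hZ (hgξ.mul hBξ) (by simpa only [sub_zero] using hPξ)).trans ?_
  simp only [sub_zero]
  gcongr
  · exact scaledNorm_nonneg hZ
  · exact scaledNorm_mul_le hZ hgξ hBξ

theorem exists_scaledNorm_truncatedSymbol_le (M : ℕ) {g P : 𝓢(ℝ, ℂ)} (hg : support g ⊆ Icc 0 1)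
    (hP₁ : ∀ ξ ∈ Icc (-1) 1, P ξ = 1) (hP₂ : support P ⊆ Icc (-2) 2) :
    ∃ A, 0 ≤ A ∧ ∀ {a b X Y : ℝ}, a < b → (0 : ℝ) ∉ Ioo a b → 0 < X → 0 < Y → ∀ ξ,
      scaledNorm (min X Y) (truncatedSymbol g P a b X Y) ξ ≤ A * (min X Y / X) ^ M := by
  obtain ⟨A₁, hA₁, hgle⟩ :=
    exists_scaledNorm_le_mul_sub_pow M (zero_le_two : (0 : ℝ) ≤ 2) g (hg.trans Icc_subset_Iic_self)
  obtain ⟨A₂, hBle⟩ := exists_scaledNorm_le (contDiff_annularBump P 1)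
    (.of_support_subset_isCompact isCompact_Icc (support_annularBump_subset hP₂)) 1
  obtain ⟨A₃, hPle⟩ := exists_scaledNorm_le (P.smooth 1)
    (.of_support_subset_isCompact isCompact_Icc hP₂) 1
  have hA₂ : 0 ≤ A₂ := (scaledNorm_nonneg zero_le_one).trans (hBle 0)
  have hA₃ : 0 ≤ A₃ := (scaledNorm_nonneg zero_le_one).trans (hPle 0)
  refine ⟨A₁ * 8 ^ M * A₂ * A₃, by positivity, fun {a b X Y} hab h₀ hX hY ξ => ?_⟩
  have hZ : 0 < min X Y := lt_min hX hY
  rcases em' (ξ ∈ tsupport (truncatedSymbol g P a b X Y)) with hξ | hξ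
  · rw [scaledNorm_eq_zero_of_notMem_tsupport hξ]
    positivity
  obtain ⟨⟨hξab, hξX⟩, hξY⟩ := tsupport_truncatedSymbol_subset hg hP₁ hP₂ hab hX hY hξ
  have hl : 0 < b - a := sub_pos.2 hab
  have hτ : (ξ - a) / (b - a) ≤ 1 := (div_le_one hl).2 (by linarith [hξab.2])
  have hZl : min X Y / (b - a) ≤ 2 :=
    (div_le_iff₀ hl).2 (by linarith [min_le_left X Y, hξX.1, hξab.2])
  have hZX : min X Y / X ≤ 1 := (div_le_one hX).2 (min_le_left X Y)
  have hZY : min X Y / (2 * Y) ≤ 1 :=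
    (div_le_one (by positivity)).2 (by linarith [min_le_right X Y])
  calc scaledNorm (min X Y) (truncatedSymbol g P a b X Y) ξ
      ≤ _ := scaledNorm_truncatedSymbol_le g P hZ.le hab hX hY
    _ ≤ A₁ * (8 * (min X Y / X)) ^ M * A₂ * A₃ := by
        have hone := one_sub_div_le_min_div hab h₀ hX hξab hξX.1 hξY
        have : 0 ≤ 1 - (ξ - a) / (b - a) := sub_nonneg.2 hτ
        gcongr
        · exact scaledNorm_nonneg (by positivity)
        · exact scaledNorm_nonneg (by positivity)
        · exact ((scaledNorm_mono hZl).trans (hgle _ hτ)).trans (by gcongr)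
        · exact (scaledNorm_mono hZX).trans (hBle _)
        · exact (scaledNorm_mono hZY).trans (hPle _)
    _ = A₁ * 8 ^ M * A₂ * A₃ * (min X Y / X) ^ M := by ring

end TruncatedSymbol

section Assembly

open SchwartzMap (fourierMultiplierCLM)

theorem lintegral_sum_enorm_fourierMultiplierCLM_rpow_le_of_scaledNorm_le {ι : Type*} [Fintype ι]
    {h : ι → 𝓢(ℝ, ℂ)} {Z A K p : ℝ} (hZ : 0 < Z)
    (hdisj : Pairwise (Disjoint on fun m => tsupport (h m)))
    (hvol : ∀ m, volume (tsupport (h m)) ≤ ENNReal.ofReal (K * Z))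
    (hA : ∀ m ξ, scaledNorm Z (h m) ξ ≤ A) (hp : 2 ≤ p) (F : 𝓢(ℝ, ℂ)) :
    (∫⁻ x, ((∑ m, ‖fourierMultiplierCLM ℂ (h m) F x‖ₑ ^ 2) ^ (1 / 2 : ℝ)) ^ p) ^ (1 / p) ≤
      ENNReal.ofReal (K / 2) ^ (1 / 2 : ℝ) * ENNReal.ofReal A *
        (∫⁻ x, ‖F x‖ₑ ^ p) ^ (1 / p) := by
  let R : ℝ≥0 := (K * Z).toNNReal ^ (1 / 2 : ℝ) * A.toNNReal
  have hcoe : (R : ℝ≥0∞) = ENNReal.ofReal (K * Z) ^ (1 / 2 : ℝ) * ENNReal.ofReal A := by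
    rw [ENNReal.coe_mul, ENNReal.coe_rpow_of_nonneg _ (by norm_num), ENNReal.ofReal,
      ENNReal.ofReal]
  have hR (m : ι) : eLpNorm (fun ξ => h m ξ + Z * deriv (h m) ξ) 2 ≤ R := by
    rw [hcoe]
    refine (eLpNorm_add_mul_deriv_le hZ.le (hA m)).trans ?_
    gcongr
    exact hvol m
  have hconst : ((R : ℝ≥0∞) ^ 2 * ENNReal.ofReal (1 / (2 * Z))) ^ (1 / 2 : ℝ) =
      ENNReal.ofReal (K / 2) ^ (1 / 2 : ℝ) * ENNReal.ofReal A := by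
    have hsqrt (u : ℝ≥0∞) : (u ^ 2) ^ (1 / 2 : ℝ) = u := by
      rw [← ENNReal.rpow_natCast_mul]
      norm_num
    have hsq (u : ℝ≥0∞) : (u ^ (1 / 2 : ℝ)) ^ 2 = u := by
      rw [← ENNReal.rpow_mul_natCast]
      norm_num
    rw [hcoe, mul_pow, hsq, mul_right_comm, ← ENNReal.ofReal_mul' (by positivity),
      ENNReal.mul_rpow_of_nonneg _ _ (by norm_num), hsqrt]
    congr 3
    field_simp
  rw [← hconst]
  exact lintegral_sum_enorm_fourierMultiplierCLM_rpow_le hZ hdisj hR hp F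

theorem exists_lintegral_sum_enorm_truncatedSymbol_rpow_le (M : ℕ) {g P : 𝓢(ℝ, ℂ)}
    (hg : support g ⊆ Icc 0 1) (hP₁ : ∀ ξ ∈ Icc (-1) 1, P ξ = 1) (hP₂ : support P ⊆ Icc (-2) 2) :
    ∃ A : ℝ, ∀ {N : ℕ} {a b : Fin N → ℝ}, Admissible a b → ∀ {X Y p : ℝ}, 0 < X → 0 < Y →
      2 ≤ p → ∀ F : 𝓢(ℝ, ℂ),
      (∫⁻ x, ((∑ m, ‖fourierMultiplierCLM ℂ (truncatedSymbol g P (a m) (b m) X Y) F x‖ₑ ^ 2)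
        ^ (1 / 2 : ℝ)) ^ p) ^ (1 / p) ≤
      ENNReal.ofReal A * ENNReal.ofReal ((min X Y / X) ^ M) * (∫⁻ x, ‖F x‖ₑ ^ p) ^ (1 / p) := by
  obtain ⟨A, hA₀, hA⟩ := exists_scaledNorm_truncatedSymbol_le M hg hP₁ hP₂
  refine ⟨2 * A, fun {N a b} hadm {X Y p} hX hY hp F => ?_⟩
  obtain ⟨hab, h₀, hdisj⟩ := hadm
  have hsub (m : Fin N) : tsupport (truncatedSymbol g P (a m) (b m) X Y) ⊆ Icc (a m) (b m) :=
    fun ξ hξ => (tsupport_truncatedSymbol_subset hg hP₁ hP₂ (hab m) hX hY hξ).1.1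
  have hcompact (m : Fin N) : HasCompactSupport (truncatedSymbol g P (a m) (b m) X Y) :=
    isCompact_Icc.of_isClosed_subset (isClosed_tsupport _) (hsub m)
  let h (m : Fin N) : 𝓢(ℝ, ℂ) := (hcompact m).toSchwartzMap (contDiff_truncatedSymbol g P ⊤)
  refine (lintegral_sum_enorm_fourierMultiplierCLM_rpow_le_of_scaledNorm_le (h := h)
    (lt_min hX hY) (fun m m' hm => (hdisj m m' hm).mono (hsub m) (hsub m'))
    (fun m => volume_tsupport_truncatedSymbol_le hg hP₁ hP₂ (hab m) hX hY)
    (fun m => hA (hab m) (h₀ m) hX hY) hp F).trans_eq ?_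
  congr 1
  have hfour : ENNReal.ofReal (8 / 2) ^ (1 / 2 : ℝ) = ENNReal.ofReal 2 := by
    rw [ENNReal.ofReal_rpow_of_pos (by norm_num), ← Real.sqrt_eq_rpow]
    norm_num
  rw [hfour, ENNReal.ofReal_mul hA₀, ENNReal.ofReal_mul zero_le_two, mul_assoc]

theorem fourierMultiplierCLM_annularBump_blockSymbol {g P : 𝓢(ℝ, ℂ)}
    (hP₁ : ∀ ξ ∈ Icc (-1) 1, P ξ = 1) (hP₂ : support P ⊆ Icc (-2) 2) (a b X Y : ℝ)
    (f : 𝓢(ℝ, ℂ)) :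
    fourierMultiplierCLM ℂ (fun ξ => annularBump P (ξ / Y))
        (fourierMultiplierCLM ℂ (blockSymbol g P a b X) f) =
      fourierMultiplierCLM ℂ (truncatedSymbol g P a b X Y)
        (fourierMultiplierCLM ℂ (fun ξ => annularBump P (ξ / Y)) f) := by
  have hQ : (fun ξ => annularBump P (ξ / Y)).HasTemperateGrowth := by
    simpa only [sub_zero] using hasTemperateGrowth_annularBump P 0 Y
  have hblock : (blockSymbol g P a b X).HasTemperateGrowth :=
    (hasTemperateGrowth_comp_sub_div g a (b - a)).mul (hasTemperateGrowth_annularBump P a X)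
  have htrunc : (truncatedSymbol g P a b X Y).HasTemperateGrowth :=
    hblock.mul (by simpa only [sub_zero] using hasTemperateGrowth_comp_sub_div P 0 (2 * Y))
  rw [SchwartzMap.fourierMultiplierCLM_fourierMultiplierCLM_apply hQ hblock,
    SchwartzMap.fourierMultiplierCLM_fourierMultiplierCLM_apply htrunc hQ]
  congr 2 with ξ
  rw [Pi.mul_apply, Pi.mul_apply, truncatedSymbol, mul_assoc, mul_comm 2 Y, ← div_div,
    mul_comm (P _), annularBump_mul_div_two hP₁ hP₂, mul_comm]

theorem lintegral_sum_enorm_blockSymbol_rpow_le {g P : 𝓢(ℝ, ℂ)}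
    (hP₁ : ∀ ξ ∈ Icc (-1) 1, P ξ = 1) (hP₂ : support P ⊆ Icc (-2) 2) {ι : Type*} [Fintype ι]
    (a b : ι → ℝ) (X : ℝ) {p : ℝ} (hp : 1 ≤ p) (f : 𝓢(ℝ, ℂ)) :
    (∫⁻ x, ((∑ m, ‖fourierMultiplierCLM ℂ (blockSymbol g P (a m) (b m) X) f x‖ₑ ^ 2)
        ^ (1 / 2 : ℝ)) ^ p) ^ (1 / p) ≤
      ∑' k : ℤ, (∫⁻ x, ((∑ m, ‖fourierMultiplierCLM ℂ (truncatedSymbol g P (a m) (b m) X (2 ^ k))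
        (fourierMultiplierCLM ℂ (fun ξ => annularBump P (ξ / 2 ^ k)) f) x‖ₑ ^ 2)
          ^ (1 / 2 : ℝ)) ^ p) ^ (1 / p) := by
  have hpointwise (x : ℝ) :
      (∑ m, ‖fourierMultiplierCLM ℂ (blockSymbol g P (a m) (b m) X) f x‖ₑ ^ 2) ^ (1 / 2 : ℝ) ≤
      ∑' k : ℤ, (∑ m, ‖fourierMultiplierCLM ℂ (truncatedSymbol g P (a m) (b m) X (2 ^ k))
        (fourierMultiplierCLM ℂ (fun ξ => annularBump P (ξ / 2 ^ k)) f) x‖ₑ ^ 2)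
          ^ (1 / 2 : ℝ) := by
    simp only [← ENNReal.rpow_two]
    refine le_trans ?_ (rpow_sum_tsum_le one_le_two _)
    gcongr with m
    simp only [← fourierMultiplierCLM_annularBump_blockSymbol hP₁ hP₂]
    exact enorm_le_tsum_enorm_fourierMultiplierCLM (hP₁ 0 (by norm_num)) _ x
  refine le_trans ?_ (lintegral_rpow_tsum_le hp fun k => ?_)
  · gcongr with x
    exact hpointwise x
  · fun_prop

theorem rpow_mul_ofReal_min_div_pow_le {s : ℝ} {M : ℕ} (hM : 2 * s ≤ M) (j k : ℤ) :
    (2 : ℝ≥0∞) ^ (j * s) * ENNReal.ofReal ((min (2 ^ j) (2 ^ k) / 2 ^ j) ^ M) ≤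
      (2 ^ (-(s / 2))) ^ (j - k).natAbs * (2 ^ (-(s / 2))) ^ (j - k).natAbs * 2 ^ (k * s) := by
  have hmin : min ((2 : ℝ) ^ j) (2 ^ k) / 2 ^ j = 2 ^ (min j k - j) := by
    rw [zpow_sub₀ two_ne_zero, (zpow_right_strictMono₀ one_lt_two).monotone.map_min]
  have hofReal (n : ℤ) : ENNReal.ofReal (2 ^ n) = (2 : ℝ≥0∞) ^ (n : ℝ) := by
    rw [← Real.rpow_intCast, ← ENNReal.ofReal_rpow_of_pos two_pos, ENNReal.ofReal_ofNat]
  rw [hmin, ENNReal.ofReal_pow (by positivity), hofReal]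
  simp only [← ENNReal.rpow_mul_natCast]
  rw [← ENNReal.rpow_add _ _ two_ne_zero ENNReal.ofNat_ne_top,
    ← ENNReal.rpow_add _ _ two_ne_zero ENNReal.ofNat_ne_top,
    ← ENNReal.rpow_add _ _ two_ne_zero ENNReal.ofNat_ne_top]
  refine ENNReal.rpow_le_rpow_of_exponent_le one_le_two ?_
  rw [Nat.cast_natAbs]
  push_cast
  rcases le_total j k with h | h
  · have : (j : ℝ) ≤ k := by exact_mod_cast h
    rw [min_eq_left this, abs_of_nonpos (by linarith)]
    linarith
  · have : (k : ℝ) ≤ j := by exact_mod_cast h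
    rw [min_eq_right this, abs_of_nonneg (by linarith)]
    nlinarith

theorem exists_rpow_mul_lintegral_sum_enorm_blockSymbol_le {g P : 𝓢(ℝ, ℂ)}
    (hg : support g ⊆ Icc 0 1) (hP₁ : ∀ ξ ∈ Icc (-1) 1, P ξ = 1) (hP₂ : support P ⊆ Icc (-2) 2)
    (s : ℝ) :
    ∃ A : ℝ, ∀ {N : ℕ} {a b : Fin N → ℝ}, Admissible a b → ∀ {p : ℝ}, 2 ≤ p →
      ∀ (f : 𝓢(ℝ, ℂ)) (j : ℤ), (2 : ℝ≥0∞) ^ (j * s) * (∫⁻ x, ((∑ m,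
        ‖fourierMultiplierCLM ℂ (blockSymbol g P (a m) (b m) (2 ^ j)) f x‖ₑ ^ 2) ^ (1 / 2 : ℝ)) ^ p)
          ^ (1 / p) ≤
      ENNReal.ofReal A * ∑' k : ℤ, (2 ^ (-(s / 2))) ^ (j - k).natAbs *
        (2 ^ (-(s / 2))) ^ (j - k).natAbs * (2 ^ (k * s) *
          (∫⁻ x, ‖fourierMultiplierCLM ℂ (fun ξ => annularBump P (ξ / 2 ^ k)) f x‖ₑ ^ p)
            ^ (1 / p)) := by
  obtain ⟨A, hA⟩ := exists_lintegral_sum_enorm_truncatedSymbol_rpow_le ⌈2 * s⌉₊ hg hP₁ hP₂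
  refine ⟨A, fun {N a b} hadm {p} hp f j => ?_⟩
  grw [lintegral_sum_enorm_blockSymbol_rpow_le hP₁ hP₂ a b (2 ^ j) (one_le_two.trans hp) f]
  rw [← ENNReal.tsum_mul_left, ← ENNReal.tsum_mul_left]
  refine ENNReal.tsum_le_tsum fun k => ?_
  grw [hA hadm (zpow_pos two_pos j) (zpow_pos two_pos k) hp, ← mul_assoc (_ * _) (2 ^ _),
    ← rpow_mul_ofReal_min_div_pow_le (Nat.le_ceil (2 * s)) j k]
  exact le_of_eq (by ring)

end Assembly

/-- uniform boundedness of the rotated family on the homogeneous Besov space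
`Ḃ^s_{pq}`, for `2 ≤ p < ∞`, `0 < q ≤ ∞` and `s > 0`. -/
theorem statement10 (φ Φ : SchwartzMap ℝ ℂ)
    (hφ : Function.support (𝓕 ⇑φ) ⊆ Set.Ioo 0 1)
    (hΦsupp : Function.support (𝓕 ⇑Φ) ⊆ Set.Icc (-2) 2)
    (hΦone : ∀ ξ ∈ Set.Icc (-1:ℝ) 1, 𝓕 ⇑Φ ξ = 1)
    (p : ℝ) (q : ℝ≥0∞) (s : ℝ) (hp : 2 ≤ p) (hq : 0 < q) (hs : 0 < s) :
    ∃ C : ℝ, 0 < C ∧ ∀ (N : ℕ) (a b : Fin N → ℝ), Admissible a b →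
      ∀ f : SchwartzMap ℝ ℂ,
        (lqNorm q fun j : ℤ => (2 : ℝ≥0∞) ^ ((j : ℝ) * s) *
            (∫⁻ x : ℝ, ((∑ m : Fin N,
              (‖conv (rotConv ⇑φ (a m) (b m) ⇑f) (psi ⇑Φ j) x‖₊ : ℝ≥0∞) ^ 2)
                ^ (1/2 : ℝ)) ^ p) ^ (1/p))
        ≤ ENNReal.ofReal C *
          lqNorm q (fun j : ℤ => (2 : ℝ≥0∞) ^ ((j : ℝ) * s) *
            (∫⁻ x : ℝ, (‖conv ⇑f (psi ⇑Φ j) x‖₊ : ℝ≥0∞) ^ p) ^ (1/p)) := by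
  have hφ' : support (𝓕 φ : 𝓢(ℝ, ℂ)) ⊆ Icc 0 1 := by
    simpa only [SchwartzMap.fourier_coe] using hφ.trans Ioo_subset_Icc_self
  simp only [← SchwartzMap.fourier_coe] at hΦsupp hΦone
  let ρ : ℝ≥0∞ := 2 ^ (-(s / 2))
  have hρ : ρ < 1 := ENNReal.rpow_lt_one_of_one_lt_of_neg ENNReal.one_lt_two (by linarith)
  obtain ⟨A, hA⟩ := exists_rpow_mul_lintegral_sum_enorm_blockSymbol_le hφ' hΦone hΦsupp s
  let K := ENNReal.ofReal A * ((∑' n : ℤ, ρ ^ n.natAbs) * lqNorm q fun n => ρ ^ n.natAbs)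
  have hK : K ≠ ∞ := ENNReal.mul_ne_top ENNReal.ofReal_ne_top
    (ENNReal.mul_ne_top (tsum_pow_natAbs_ne_top hρ) (lqNorm_pow_natAbs_ne_top hq.ne' hρ))
  refine ⟨K.toReal + 1, by positivity, fun N a b hadm f => ?_⟩
  have hblock (m : Fin N) (j : ℤ) (x : ℝ) :=
    enorm_eq_iff_norm_eq.2 (norm_conv_rotConv_psi φ Φ f (hadm.1 m) j x)
  simp only [← enorm_eq_nnnorm, hblock, conv_psi]
  grw [lqNorm_mono (hA hadm hp f), lqNorm_const_mul hq.ne',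
    lqNorm_tsum_mul_le hq.ne' (fun n => ρ ^ n.natAbs) (fun n => ρ ^ n.natAbs), ← mul_assoc]
  gcongr
  exact ENNReal.le_ofReal_iff_toReal_le hK (by positivity) |>.2 (le_add_of_nonneg_right zero_le_one)
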